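/- Let S be a bounded linear operator on H admitting an A-adjoint. Then ω_A(S)^4 ≤ (1/4) · ‖ (S^{♯_A} S)² + (S S^{♯_A})² ‖_A + (1/2) · ω_A( S^{♯_A} S² S^{♯_A} ). -/

import Mathlib

noncomputable section

open ContinuousLinearMap

variable {H : Type*} [NormedAddCommGroup H] [InnerProductSpace ℂ H] [CompleteSpace H]

/-- The semi-inner product induced by the positive operator `A`: `⟨x, y⟩_A := ⟨A x, y⟩`. -/
def innA (A : H →L[ℂ] H) (x y : H) : ℂ := inner ℂ (A x) y

/-- The seminorm induced by `A`: `‖x‖_A := ⟨x, x⟩_A ^ (1/2)`. -/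
def vnormA (A : H →L[ℂ] H) (x : H) : ℝ := Real.sqrt (innA A x x).re

/-- The `A`-operator seminorm: `‖T‖_A := sup {‖T x‖_A : ‖x‖_A = 1}`. -/
def opNormA (A T : H →L[ℂ] H) : ℝ :=
  sSup {c : ℝ | ∃ x : H, vnormA A x = 1 ∧ c = vnormA A (T x)}

/-- The `A`-numerical radius: `ω_A(T) := sup {|⟨T x, x⟩_A| : ‖x‖_A = 1}`. -/
def wA (A T : H →L[ℂ] H) : ℝ :=
  sSup {c : ℝ | ∃ x : H, vnormA A x = 1 ∧ c = ‖innA A (T x) x‖}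

/-- `T` admits an `A`-adjoint: there is a bounded operator `X` with `A X = T* A`. -/
def HasAAdjoint (A T : H →L[ℂ] H) : Prop :=
  ∃ X : H →L[ℂ] H, A ∘L X = adjoint T ∘L A

/-- `X` is the reduced `A`-adjoint `T^{♯_A}` of `T`: it solves `A X = T* A` and its range
is contained in the closure of the range of `A`. -/
def IsReducedAAdjoint (A T X : H →L[ℂ] H) : Prop :=
  (A ∘L X = adjoint T ∘L A) ∧ ∀ y : H, X y ∈ closure (Set.range A)

/-!
Let `X` be an `A`-adjoint of `S`. Both `P = X S` and `Q = S X` are symmetric for the semi-inner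
product. For `‖x‖_A = 1`, the Cauchy–Schwarz inequality applied to `⟨S x, x⟩_A` and to
`⟨S x, x⟩_A = ⟨x, X x⟩_A` gives `2 |⟨S x, x⟩_A|² ≤ ‖S x‖_A² + ‖X x‖_A² = ⟨(P + Q) x, x⟩_A`, and the
right-hand side is at most `‖(P + Q) x‖_A`. Now square and expand
`‖(P + Q) x‖_A² = ⟨(P² + Q²) x, x⟩_A + 2 Re ⟨P Q x, x⟩_A`, where `P Q = X S² X`.

The suprema bound these last terms only if they are finite, that is, if operators with an
`A`-adjoint are bounded for `‖·‖_A`. Since `‖T x‖_A² = ⟨X T x, x⟩_A`, it is enough to bound a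
symmetric `R`. Iterating `‖R x‖_A² ≤ ‖R² x‖_A ‖x‖_A` compares `‖R x‖_A ^ 2ⁿ` with a constant
multiple of `(‖R‖ ‖x‖_A) ^ 2ⁿ` for all `n`, hence `‖R x‖_A ≤ ‖R‖ ‖x‖_A` (Krein, Lax).
-/

open Filter

theorem le_of_frequently_pow_le_const_mul_pow {a b C : ℝ} (hb : 0 ≤ b)
    (h : ∃ᶠ n : ℕ in atTop, a ^ n ≤ C * b ^ n) : a ≤ b := by
  by_contra! hba
  have ha : 0 < a := hb.trans_lt hba
  have hlim : Tendsto (fun n : ℕ => C * (b / a) ^ n) atTop (nhds 0) := by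
    simpa only [mul_zero] using (tendsto_pow_atTop_nhds_zero_of_lt_one (div_nonneg hb ha.le)
      ((div_lt_one ha).2 hba)).const_mul C
  obtain ⟨n, hn, hlt⟩ := (h.and_eventually (hlim.eventually_lt_const one_pos)).exists
  rw [div_pow, mul_div_assoc', div_lt_one (pow_pos ha n)] at hlt
  exact hlt.not_ge hn

variable {E : Type*} [NormedAddCommGroup E] [InnerProductSpace ℂ E]
  {A P Q R S T T' X X' : E →L[ℂ] E} {x : E}

theorem innA_add_left (A : E →L[ℂ] E) (x y z : E) :
    innA A (x + y) z = innA A x z + innA A y z := by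
  simp only [innA, map_add, inner_add_left]

theorem innA_add_right (A : E →L[ℂ] E) (x y z : E) :
    innA A x (y + z) = innA A x y + innA A x z :=
  inner_add_right _ _ _

theorem innA_conj_symm (hA : A.IsPositive) (x y : E) :
    starRingEnd ℂ (innA A y x) = innA A x y := by
  rw [innA, inner_conj_symm, innA, hA.inner_left_eq_inner_right]

/-- The semi-inner product space structure on `E` given by `⟨·, ·⟩_A`, for `A` positive; it makes
the Cauchy–Schwarz inequality for `⟨·, ·⟩_A` available. -/
abbrev preInnerCoreA (hA : A.IsPositive) : PreInnerProductSpace.Core ℂ E where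
  inner := innA A
  conj_inner_symm := innA_conj_symm hA
  re_inner_nonneg := hA.re_inner_nonneg_left
  add_left := innA_add_left A
  smul_left x y r := by simp only [innA, map_smul, inner_smul_left]

theorem norm_innA_le (hA : A.IsPositive) (x y : E) :
    ‖innA A x y‖ ≤ vnormA A x * vnormA A y :=
  @InnerProductSpace.Core.norm_inner_le_norm ℂ E _ _ _ (preInnerCoreA hA) x y

theorem re_innA_le (hA : A.IsPositive) (x y : E) :
    (innA A x y).re ≤ vnormA A x * vnormA A y :=
  (Complex.re_le_norm _).trans (norm_innA_le hA x y)

theorem vnormA_nonneg (A : E →L[ℂ] E) (x : E) : 0 ≤ vnormA A x :=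
  Real.sqrt_nonneg _

theorem vnormA_sq (hA : A.IsPositive) (x : E) : vnormA A x ^ 2 = (innA A x x).re :=
  Real.sq_sqrt (hA.re_inner_nonneg_left x)

theorem vnormA_le_sqrt_norm_mul_norm (A : E →L[ℂ] E) (x : E) :
    vnormA A x ≤ √‖A‖ * ‖x‖ := by
  refine Real.sqrt_le_iff.2 ⟨by positivity, ?_⟩
  calc (innA A x x).re ≤ ‖A x‖ * ‖x‖ := (Complex.re_le_norm _).trans (norm_inner_le_norm _ _)
    _ ≤ ‖A‖ * ‖x‖ * ‖x‖ := by gcongr; exact A.le_opNorm x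
    _ = (√‖A‖ * ‖x‖) ^ 2 := by rw [mul_pow, Real.sq_sqrt (norm_nonneg A)]; ring

/-- `X` is an `A`-adjoint of `T`, expressed through the semi-inner product so that it makes sense
on a space that is not complete. With `X = T` it says that `T` is `A`-symmetric. -/
def IsAAdjointPair (A T X : E →L[ℂ] E) : Prop :=
  ∀ x y, innA A (T x) y = innA A x (X y)

namespace IsAAdjointPair

theorem symm (hA : A.IsPositive) (h : IsAAdjointPair A T X) : IsAAdjointPair A X T :=
  fun x y => by rw [← innA_conj_symm hA, ← h, innA_conj_symm hA]

theorem add (h : IsAAdjointPair A T X) (h' : IsAAdjointPair A T' X') :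
    IsAAdjointPair A (T + T') (X + X') := fun x y => by
  simp only [add_apply, innA_add_left, innA_add_right, h x y, h' x y]

theorem mul (h : IsAAdjointPair A T X) (h' : IsAAdjointPair A T' X') :
    IsAAdjointPair A (T * T') (X' * X) := fun x y => by
  simp only [mul_apply_eq_comp, h _ _, h' _ _]

theorem pow (h : IsAAdjointPair A T X) (n : ℕ) : IsAAdjointPair A (T ^ n) (X ^ n) := by
  induction n with
  | zero => exact fun _ _ => rfl
  | succ n ih => rw [pow_succ, pow_succ']; exact ih.mul h

theorem vnormA_apply_sq (hA : A.IsPositive) (h : IsAAdjointPair A T X) (x : E) :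
    vnormA A (T x) ^ 2 = (innA A ((X * T) x) x).re := by
  rw [vnormA_sq hA, mul_apply_eq_comp, h.symm hA]

theorem vnormA_apply_sq_le (hA : A.IsPositive) (h : IsAAdjointPair A T X) (x : E) :
    vnormA A (T x) ^ 2 ≤ vnormA A ((X * T) x) * vnormA A x :=
  (h.vnormA_apply_sq hA x).trans_le (re_innA_le hA _ _)

theorem vnormA_apply_pow_two_pow_le (hA : A.IsPositive) (hR : IsAAdjointPair A R R) (x : E)
    (n : ℕ) :
    vnormA A (R x) ^ 2 ^ n ≤ vnormA A ((R ^ 2 ^ n) x) * vnormA A x ^ (2 ^ n - 1) := by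
  induction n with
  | zero => simp
  | succ n ih =>
    have hexp : 2 ^ (n + 1) - 1 = 1 + (2 ^ n - 1) * 2 := by
      have := Nat.one_le_two_pow (n := n)
      omega
    calc vnormA A (R x) ^ 2 ^ (n + 1) = (vnormA A (R x) ^ 2 ^ n) ^ 2 := by rw [pow_succ, pow_mul]
      _ ≤ (vnormA A ((R ^ 2 ^ n) x) * vnormA A x ^ (2 ^ n - 1)) ^ 2 :=
        pow_le_pow_left₀ (pow_nonneg (vnormA_nonneg A _) _) ih 2
      _ = vnormA A ((R ^ 2 ^ n) x) ^ 2 * vnormA A x ^ ((2 ^ n - 1) * 2) := by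
        rw [mul_pow, ← pow_mul]
      _ ≤ vnormA A ((R ^ 2 ^ n * R ^ 2 ^ n) x) * vnormA A x * vnormA A x ^ ((2 ^ n - 1) * 2) :=
        mul_le_mul_of_nonneg_right ((hR.pow _).vnormA_apply_sq_le hA x)
          (pow_nonneg (vnormA_nonneg A x) _)
      _ = vnormA A ((R ^ 2 ^ (n + 1)) x) * vnormA A x ^ (2 ^ (n + 1) - 1) := by
        rw [hexp, ← pow_add, ← mul_two, ← pow_succ, pow_add (vnormA A x), pow_one,
          mul_assoc]

theorem vnormA_apply_le_norm_mul (hA : A.IsPositive) (hR : IsAAdjointPair A R R) (x : E) :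
    vnormA A (R x) ≤ ‖R‖ * vnormA A x := by
  rcases (vnormA_nonneg A x).eq_or_lt' with hx | hx
  · have hsq := hR.vnormA_apply_sq_le hA x
    rw [hx, mul_zero] at hsq ⊢
    exact (pow_eq_zero_iff two_ne_zero).1 (hsq.antisymm (sq_nonneg _)) |>.le
  have hpow (n : ℕ) : vnormA A (R x) ^ 2 ^ n ≤
      √‖A‖ * ‖x‖ / vnormA A x * (‖R‖ * vnormA A x) ^ 2 ^ n := by
    have hbound : vnormA A ((R ^ 2 ^ n) x) ≤ √‖A‖ * (‖R‖ ^ 2 ^ n * ‖x‖) := by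
      refine (vnormA_le_sqrt_norm_mul_norm A _).trans ?_
      gcongr
      exact (R ^ 2 ^ n).le_of_opNorm_le (norm_pow_le' R (by positivity)) x
    calc vnormA A (R x) ^ 2 ^ n ≤ vnormA A ((R ^ 2 ^ n) x) * vnormA A x ^ (2 ^ n - 1) :=
        hR.vnormA_apply_pow_two_pow_le hA x n
      _ ≤ √‖A‖ * (‖R‖ ^ 2 ^ n * ‖x‖) * vnormA A x ^ (2 ^ n - 1) := by gcongr
      _ = √‖A‖ * ‖x‖ / vnormA A x * (‖R‖ * vnormA A x) ^ 2 ^ n := by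
        rw [mul_pow, ← pow_sub_one_mul (n := 2 ^ n) (by positivity) (vnormA A x)]
        field_simp
  exact le_of_frequently_pow_le_const_mul_pow (by positivity)
    ((tendsto_pow_atTop_atTop_of_one_lt one_lt_two).frequently (Frequently.of_forall hpow))

theorem vnormA_apply_le_sqrt_norm_mul (hA : A.IsPositive) (h : IsAAdjointPair A T X) (x : E) :
    vnormA A (T x) ≤ √‖X * T‖ * vnormA A x := by
  have hx := vnormA_nonneg A x
  refine le_of_sq_le_sq ?_ (by positivity)
  calc vnormA A (T x) ^ 2 ≤ vnormA A ((X * T) x) * vnormA A x := h.vnormA_apply_sq_le hA x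
    _ ≤ ‖X * T‖ * vnormA A x * vnormA A x :=
      mul_le_mul_of_nonneg_right (((h.symm hA).mul h).vnormA_apply_le_norm_mul hA x) hx
    _ = (√‖X * T‖ * vnormA A x) ^ 2 := by rw [mul_pow, Real.sq_sqrt (norm_nonneg _)]; ring

theorem vnormA_apply_le_opNormA (hA : A.IsPositive) (h : IsAAdjointPair A T X)
    (hx : vnormA A x = 1) : vnormA A (T x) ≤ opNormA A T := by
  refine le_csSup ⟨√‖X * T‖, ?_⟩ ⟨x, hx, rfl⟩
  rintro c ⟨y, hy, rfl⟩
  simpa only [hy, mul_one] using h.vnormA_apply_le_sqrt_norm_mul hA y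

theorem re_innA_apply_le_opNormA (hA : A.IsPositive) (h : IsAAdjointPair A T X)
    (hx : vnormA A x = 1) : (innA A (T x) x).re ≤ opNormA A T :=
  (re_innA_le hA (T x) x).trans (by rw [hx, mul_one]; exact h.vnormA_apply_le_opNormA hA hx)

theorem norm_innA_apply_le_wA (hA : A.IsPositive) (h : IsAAdjointPair A T X)
    (hx : vnormA A x = 1) : ‖innA A (T x) x‖ ≤ wA A T := by
  refine le_csSup ⟨opNormA A T, ?_⟩ ⟨x, hx, rfl⟩
  rintro c ⟨y, hy, rfl⟩
  exact (norm_innA_le hA (T y) y).trans (by rw [hy, mul_one]; exact h.vnormA_apply_le_opNormA hA hy)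

theorem two_mul_norm_innA_apply_sq_le (hA : A.IsPositive) (h : IsAAdjointPair A S X) (x : E) :
    2 * ‖innA A (S x) x‖ ^ 2 ≤ (innA A ((X * S + S * X) x) x).re * vnormA A x ^ 2 := by
  have hS : ‖innA A (S x) x‖ ≤ vnormA A (S x) * vnormA A x := norm_innA_le hA _ _
  have hX : ‖innA A (S x) x‖ ≤ vnormA A x * vnormA A (X x) := h x x ▸ norm_innA_le hA _ _
  calc 2 * ‖innA A (S x) x‖ ^ 2 = ‖innA A (S x) x‖ ^ 2 + ‖innA A (S x) x‖ ^ 2 := two_mul _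
    _ ≤ (vnormA A (S x) * vnormA A x) ^ 2 + (vnormA A x * vnormA A (X x)) ^ 2 := by gcongr
    _ = (vnormA A (S x) ^ 2 + vnormA A (X x) ^ 2) * vnormA A x ^ 2 := by ring
    _ = (innA A ((X * S + S * X) x) x).re * vnormA A x ^ 2 := by
      rw [h.vnormA_apply_sq hA, (h.symm hA).vnormA_apply_sq hA, add_apply, innA_add_left,
        Complex.add_re]

theorem vnormA_add_apply_sq (hA : A.IsPositive) (hP : IsAAdjointPair A P P)
    (hQ : IsAAdjointPair A Q Q) (x : E) :
    vnormA A ((P + Q) x) ^ 2 =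
      (innA A ((P ^ 2 + Q ^ 2) x) x).re + 2 * (innA A ((P * Q) x) x).re := by
  have hcross : (innA A ((Q * P) x) x).re = (innA A ((P * Q) x) x).re := by
    rw [hQ.mul hP, ← innA_conj_symm hA, Complex.conj_re]
  have hexpand : (P + Q) * (P + Q) = P ^ 2 + Q ^ 2 + (P * Q + Q * P) := by noncomm_ring
  rw [(hP.add hQ).vnormA_apply_sq hA, hexpand, add_apply, add_apply (P * Q), innA_add_left,
    innA_add_left, Complex.add_re, Complex.add_re, hcross, two_mul]

end IsAAdjointPair

theorem isAAdjointPair_of_comp_eq_adjoint_comp {A T X : H →L[ℂ] H} (hA : A.IsPositive)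
    (h : A ∘L X = adjoint T ∘L A) : IsAAdjointPair A T X := by
  have hXT : IsAAdjointPair A X T := fun x y => by
    rw [innA, ← comp_apply, h, comp_apply, adjoint_inner_left, innA]
  exact hXT.symm hA

theorem opNormA_nonneg (A T : E →L[ℂ] E) : 0 ≤ opNormA A T :=
  Real.sSup_nonneg (by rintro c ⟨x, -, rfl⟩; exact vnormA_nonneg _ _)

theorem wA_nonneg (A T : E →L[ℂ] E) : 0 ≤ wA A T :=
  Real.sSup_nonneg (by rintro c ⟨x, -, rfl⟩; exact norm_nonneg _)

theorem wA_pow_le {n : ℕ} (hn : n ≠ 0) {b : ℝ} (hb : 0 ≤ b)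
    (h : ∀ x, vnormA A x = 1 → ‖innA A (T x) x‖ ^ n ≤ b) : wA A T ^ n ≤ b := by
  have hroot : (b ^ (n⁻¹ : ℝ)) ^ n = b := Real.rpow_inv_natCast_pow hb hn
  have hle : wA A T ≤ b ^ (n⁻¹ : ℝ) := by
    refine Real.sSup_le ?_ (by positivity)
    rintro c ⟨x, hx, rfl⟩
    exact le_of_pow_le_pow_left₀ hn (by positivity) ((h x hx).trans_eq hroot.symm)
  exact (pow_le_pow_left₀ (wA_nonneg A T) hle n).trans_eq hroot

theorem stmt13_general (hA : A.IsPositive) (_hA0 : A ≠ 0) (hSX : IsAAdjointPair A S X) :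
    wA A S ^ 4 ≤
      (1 / 4) * opNormA A ((X * S) ^ 2 + (S * X) ^ 2) + (1 / 2) * wA A (X * S ^ 2 * X) := by
  have hP : IsAAdjointPair A (X * S) (X * S) := (hSX.symm hA).mul hSX
  have hQ : IsAAdjointPair A (S * X) (S * X) := hSX.mul (hSX.symm hA)
  have hPQ : X * S ^ 2 * X = X * S * (S * X) := by noncomm_ring
  have hopNormA := opNormA_nonneg A ((X * S) ^ 2 + (S * X) ^ 2)
  have hwA := wA_nonneg A (X * S ^ 2 * X)
  refine wA_pow_le four_ne_zero (by positivity) fun x hx => ?_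
  have hschwarz : 2 * ‖innA A (S x) x‖ ^ 2 ≤ vnormA A ((X * S + S * X) x) := by
    simpa only [hx, one_pow, mul_one] using
      (hSX.two_mul_norm_innA_apply_sq_le hA x).trans
        (mul_le_mul_of_nonneg_right (re_innA_le hA _ _) (sq_nonneg _))
  have hsum : (innA A (((X * S) ^ 2 + (S * X) ^ 2) x) x).re ≤
      opNormA A ((X * S) ^ 2 + (S * X) ^ 2) :=
    ((hP.pow 2).add (hQ.pow 2)).re_innA_apply_le_opNormA hA hx
  have hprod : (innA A ((X * S * (S * X)) x) x).re ≤ wA A (X * S * (S * X)) :=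
    (Complex.re_le_norm _).trans ((hP.mul hQ).norm_innA_apply_le_wA hA hx)
  calc ‖innA A (S x) x‖ ^ 4 = 1 / 4 * (2 * ‖innA A (S x) x‖ ^ 2) ^ 2 := by ring
    _ ≤ 1 / 4 * vnormA A ((X * S + S * X) x) ^ 2 := by gcongr
    _ ≤ _ := by rw [hP.vnormA_add_apply_sq hA hQ, hPQ]; linarith

theorem stmt13 (A : H →L[ℂ] H) (hA : A.IsPositive) (hA0 : A ≠ 0)
    (S Ssharp : H →L[ℂ] H) (hS : IsReducedAAdjoint A S Ssharp) :
    wA A S ^ 4 ≤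
      (1 / 4) * opNormA A ((Ssharp * S) ^ 2 + (S * Ssharp) ^ 2) +
        (1 / 2) * wA A (Ssharp * S ^ 2 * Ssharp) :=
  stmt13_general hA hA0 (isAAdjointPair_of_comp_eq_adjoint_comp hA hS.1)
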